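/- Let k be an algebraically closed field of characteristic 0, and let Y and Z be closed subvarieties of affine d-space over k that intersect in finitely many points, including the origin, and such that dim(Y) + dim(Z) = d. If f is a nonzero regular function on affine d-space that vanishes to order m along Y and to order n along Z, then f vanishes to order at least m+n at the origin. -/

import Mathlib

/-!
Let `R` be the local ring of `Y × Z` at `(0, 0)`, with maximal ideal `M`, and let `y, z ∈ R ^ d` be
the coordinates on the two factors.  Put `w = y - z` and `I = (w₁, …, w_d)`, and restrict `f` to
the line through `z` and `y`: the polynomial `g(t) = f(z + t w) ∈ R[t]` has its `j`-th coefficient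
in `I ^ j`, that is, it lies in the Rees algebra of `I`.  Since `f` vanishes to order `n` along `Z`
and `m` along `Y`, `g` is divisible by the monic polynomial `t ^ n (t - 1) ^ m`.  Modulo
`I ^ (m + n)` the polynomial `g` has degree less than `m + n` and a monic divisor of degree `m + n`,
so it vanishes: every coefficient of `g` lies in `I ^ (m + n)`.

On the other hand, as `z ∈ M ^ d`, the `r`-th coefficient of `g` is congruent to `f_r(w)` modulo
`M I ^ r`, where `f_r` is the homogeneous part of `f` of degree `r`.  Hence `f_r(w) ∈ M I ^ r` for
`r < m + n`.  Because the origin is isolated in `Y ∩ Z` and `dim R = d`, the elements `w₁, …, w_d`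
form a system of parameters of `R`; these are analytically independent, so `f_r = 0`.
-/

/-- The set of common zeros in affine `d`-space `k^d` of an ideal of polynomials:
the closed subvariety `V(p)`. -/
def affineZeros {k : Type*} [CommSemiring k] {d : ℕ}
    (p : Ideal (MvPolynomial (Fin d) k)) : Set (Fin d → k) :=
  {a | ∀ f ∈ p, MvPolynomial.eval a f = 0}

/-- The iterated partial derivative of a polynomial along a list of coordinate
directions; its order is the length of the list. -/
noncomputable def iteratedPDeriv {k : Type*} [CommSemiring k] {d : ℕ}
    (v : List (Fin d)) (f : MvPolynomial (Fin d) k) : MvPolynomial (Fin d) k :=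
  v.foldl (fun g i => MvPolynomial.pderiv i g) f

/-- A polynomial `f` vanishes to order `m` along a set `Y ⊆ k^d` if every partial
derivative of `f` of order `< m` vanishes identically on `Y` while some partial
derivative of order `m` does not vanish identically on `Y`. -/
def VanishesToOrderAlong {k : Type*} [CommSemiring k] {d : ℕ}
    (f : MvPolynomial (Fin d) k) (Y : Set (Fin d → k)) (m : ℕ) : Prop :=
  (∀ v : List (Fin d), v.length < m → ∀ a ∈ Y,
      MvPolynomial.eval a (iteratedPDeriv v f) = 0) ∧
  (∃ v : List (Fin d), v.length = m ∧ ∃ a ∈ Y,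
      MvPolynomial.eval a (iteratedPDeriv v f) ≠ 0)

section VanishingOrder

open MvPolynomial

/-- The restriction of a polynomial to the line `t ↦ z + t w`, as a polynomial in the parameter
`t` (the variable of `R[X]`). -/
noncomputable def restrictToLine {k R σ : Type*} [CommSemiring k] [CommSemiring R] [Algebra k R]
    (z w : σ → R) : MvPolynomial σ k →ₐ[k] Polynomial R :=
  aeval fun i => Polynomial.C (z i) + Polynomial.C (w i) * Polynomial.X

section RestrictToLine

variable {k R σ : Type*} [CommSemiring k] [CommRing R] [Algebra k R] (z w : σ → R)

@[simp]
lemma restrictToLine_X (i : σ) :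
    restrictToLine z w (X i : MvPolynomial σ k) =
      Polynomial.C (z i) + Polynomial.C (w i) * Polynomial.X :=
  aeval_X _ i

lemma eval_restrictToLine (c : R) (f : MvPolynomial σ k) :
    (restrictToLine z w f).eval c = aeval (fun i => z i + w i * c) f := by
  rw [← Polynomial.coe_aeval_eq_eval]
  change ((Polynomial.aeval c).restrictScalars k).comp (restrictToLine z w) f = _
  congr 1
  ext i
  simp

lemma derivative_restrictToLine [Fintype σ] (f : MvPolynomial σ k) :
    (restrictToLine z w f).derivative =
      ∑ i, Polynomial.C (w i) * restrictToLine z w (pderiv i f) := by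
  classical
  induction f using MvPolynomial.induction_on with
  | C a => simp [restrictToLine, Polynomial.algebraMap_apply]
  | add f g hf hg => simp only [map_add, hf, hg, mul_add, Finset.sum_add_distrib]
  | mul_X f j hf =>
    have leibniz (i : σ) : restrictToLine z w (pderiv i (f * X j)) =
        restrictToLine z w (pderiv i f) * restrictToLine z w (X j : MvPolynomial σ k) +
          if i = j then restrictToLine z w f else 0 := by
      rw [pderiv_mul, pderiv_X, map_add, map_mul]
      rcases eq_or_ne i j with rfl | hij
      · simp
      · simp [hij, hij.symm]
    simp_rw [leibniz, mul_add, Finset.sum_add_distrib, ← mul_assoc, ← Finset.sum_mul, ← hf]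
    simp only [map_mul, restrictToLine_X, Polynomial.derivative_mul, Polynomial.derivative_add,
      Polynomial.derivative_C, zero_mul, Polynomial.derivative_X, mul_one, zero_add, mul_ite,
      mul_zero, Finset.sum_ite_eq', Finset.mem_univ, ↓reduceIte]
    ring

end RestrictToLine

lemma X_sub_C_pow_succ_dvd_of_dvd_derivative {R : Type*} [CommRing R] [IsAddTorsionFree R]
    {p : Polynomial R} {c : R} {n : ℕ} (hc : p.eval c = 0)
    (hp : (Polynomial.X - Polynomial.C c) ^ n ∣ p.derivative) :
    (Polynomial.X - Polynomial.C c) ^ (n + 1) ∣ p := by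
  rw [Polynomial.X_sub_C_pow_dvd_iff, Polynomial.X_pow_dvd_iff] at hp ⊢
  rintro (_ | j) hj
  · simpa [Polynomial.coeff_zero_eq_eval_zero] using hc
  · have hderiv := hp j (by omega)
    have : p.derivative.comp (Polynomial.X + Polynomial.C c) =
        (p.comp (Polynomial.X + Polynomial.C c)).derivative := by
      simp [Polynomial.derivative_comp]
    rw [this, Polynomial.coeff_derivative, mul_comm] at hderiv
    refine (nsmul_eq_zero_iff_right (Nat.succ_ne_zero j)).mp ?_
    rw [nsmul_eq_mul]
    exact_mod_cast hderiv

lemma X_sub_C_pow_dvd_restrictToLine {k R : Type*} [CommSemiring k] [CommRing R]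
    [IsAddTorsionFree R] [Algebra k R] {d : ℕ} (z w : Fin d → R) (c : R) {n : ℕ}
    {f : MvPolynomial (Fin d) k}
    (hf : ∀ v : List (Fin d), v.length < n →
      aeval (fun i => z i + w i * c) (iteratedPDeriv v f) = 0) :
    (Polynomial.X - Polynomial.C c) ^ n ∣ restrictToLine z w f := by
  induction n generalizing f with
  | zero => simp
  | succ n ih =>
    apply X_sub_C_pow_succ_dvd_of_dvd_derivative
    · rw [eval_restrictToLine]
      exact hf [] n.succ_pos
    · rw [derivative_restrictToLine]
      exact Finset.dvd_sum fun i _ => (ih fun v hv => hf (i :: v) (by simpa using hv)).mul_left _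

lemma coeff_mem_pow_of_monic_dvd {R : Type*} [CommRing R] {I : Ideal R} {G P : Polynomial R}
    (hG : G ∈ reesAlgebra I) (hP : P.Monic) (hPG : P ∣ G) (j : ℕ) :
    G.coeff j ∈ I ^ P.natDegree := by
  rcases subsingleton_or_nontrivial (R ⧸ I ^ P.natDegree) with _ | _
  · exact Ideal.Quotient.eq_zero_iff_mem.mp (Subsingleton.elim _ _)
  set π := Ideal.Quotient.mk (I ^ P.natDegree)
  suffices hmap : G.map π = 0 by
    rw [← Ideal.Quotient.eq_zero_iff_mem, ← Polynomial.coeff_map, hmap, Polynomial.coeff_zero]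
  by_contra hne
  have := π.domain_nontrivial
  refine (hP.map π).not_dvd_of_degree_lt hne ?_ (Polynomial.map_dvd π hPG)
  rw [hP.degree_map, Polynomial.degree_eq_natDegree hP.ne_zero, Polynomial.degree_lt_iff_coeff_zero]
  intro i hi
  rw [Polynomial.coeff_map, Ideal.Quotient.eq_zero_iff_mem]
  exact Ideal.pow_le_pow_right hi (hG i)

section InitialForm

variable {k R σ : Type*} [CommSemiring k] [CommRing R] [Algebra k R]

lemma restrictToLine_mem_reesAlgebra {I : Ideal R} {z w : σ → R} (hw : ∀ i, w i ∈ I)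
    (f : MvPolynomial σ k) : restrictToLine z w f ∈ reesAlgebra I := by
  induction f using MvPolynomial.induction_on with
  | C a =>
    simpa [restrictToLine] using (reesAlgebra I).algebraMap_mem (algebraMap k R a)
  | add f g hf hg => rw [map_add]; exact add_mem hf hg
  | mul_X f i hf =>
    rw [map_mul, restrictToLine_X, Polynomial.C_mul_X_eq_monomial]
    exact mul_mem hf (add_mem ((reesAlgebra I).algebraMap_mem (z i))
      (reesAlgebra.monomial_mem.mpr (by simpa using hw i)))

lemma aeval_mul_right_of_isHomogeneous {F : MvPolynomial σ k} {r : ℕ} (hF : F.IsHomogeneous r)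
    (v : σ → R) (y : R) : aeval (fun i => v i * y) F = aeval v F * y ^ r := by
  simp only [aeval_def, eval₂_eq, Finset.sum_mul]
  refine Finset.sum_congr rfl fun e he => ?_
  have hdeg : ∑ i ∈ e.support, e i = r := by
    rw [← hF (mem_support_iff.mp he), Pi.one_def, ← Finsupp.degree_eq_weight_one,
      Finsupp.degree_apply]
  rw [← hdeg, ← Finset.prod_pow_eq_pow_sum, mul_assoc, ← Finset.prod_mul_distrib]
  simp only [mul_pow]

lemma coeff_restrictToLine_zero (w : σ → R) (f : MvPolynomial σ k) (r : ℕ) :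
    (restrictToLine 0 w f).coeff r = aeval w (homogeneousComponent r f) := by
  induction f using MvPolynomial.induction_on' with
  | monomial e a =>
    have he : (monomial e a).IsHomogeneous e.degree := isHomogeneous_monomial a rfl
    have hline : restrictToLine 0 w (monomial e a) =
        Polynomial.C (aeval w (monomial e a)) * Polynomial.X ^ e.degree := by
      rw [← Polynomial.algebraMap_eq, ← aeval_algebraMap_apply,
        ← aeval_mul_right_of_isHomogeneous he]
      simp [restrictToLine]
    rw [hline, Polynomial.coeff_C_mul_X_pow, homogeneousComponent_of_mem he]
    split_ifs <;> simp
  | add f g hf hg => simp only [map_add, Polynomial.coeff_add, hf, hg]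

lemma coeff_restrictToLine_sub_mem {I J : Ideal R} {z w : σ → R} (hz : ∀ i, z i ∈ J)
    (hw : ∀ i, w i ∈ I) (f : MvPolynomial σ k) (r : ℕ) :
    (restrictToLine z w f).coeff r - aeval w (homogeneousComponent r f) ∈ J * I ^ r := by
  rw [← coeff_restrictToLine_zero]
  induction f using MvPolynomial.induction_on generalizing r with
  | C a => simp [restrictToLine]
  | add f g hf hg =>
    simp only [map_add, Polynomial.coeff_add, add_sub_add_comm]
    exact add_mem (hf r) (hg r)
  | mul_X f i hf =>
    rcases r with _ | r
    · simpa [mul_add] using Ideal.mul_mem_left _ _ (hz i)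
    · have hcoeff : (restrictToLine z w (f * X i)).coeff (r + 1) -
          (restrictToLine 0 w (f * X i)).coeff (r + 1) =
          z i * (restrictToLine z w f).coeff (r + 1) +
            ((restrictToLine z w f).coeff r - (restrictToLine 0 w f).coeff r) * w i := by
        simp only [map_mul, restrictToLine_X, mul_add, ← mul_assoc, Polynomial.coeff_add,
          Polynomial.coeff_mul_X, Polynomial.coeff_mul_C, Pi.zero_apply]
        ring
      rw [hcoeff]
      refine add_mem (Ideal.mul_mem_mul (hz i) (restrictToLine_mem_reesAlgebra hw f _)) ?_
      rw [pow_succ, ← mul_assoc]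
      exact Ideal.mul_mem_mul (hf r) (hw i)

end InitialForm

end VanishingOrder

section AnalyticIndependence

open MvPolynomial IsLocalRing

lemma mem_minimalPrimes_of_le_radical {R : Type*} [CommSemiring R] {I J P : Ideal R}
    (hP : P ∈ I.minimalPrimes) (hJP : J ≤ P) (hIJ : I ≤ J.radical) : P ∈ J.minimalPrimes :=
  ⟨⟨hP.1.1, hJP⟩, fun _ hQ hQP => hP.2 ⟨hQ.1, hIJ.trans (hQ.1.radical_le_iff.mpr hQ.2)⟩ hQP⟩

variable {k R : Type*} [Field k] [CommRing R] [IsLocalRing R] [Algebra k R]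

lemma pow_mem_of_aeval_mem_maximalIdeal_mul {σ : Type*} {w : σ → R} {F : MvPolynomial σ k} {r : ℕ}
    (hF : F.IsHomogeneous r) (hFw : aeval w F ∈ maximalIdeal R * Ideal.span (Set.range w) ^ r)
    {a : σ → k} (ha : eval a F ≠ 0) {y : R} {J : Ideal R}
    (hJ : ∀ i, w i - algebraMap k R (a i) * y ∈ J) : y ^ r ∈ J := by
  let π := Ideal.Quotient.mk J
  have hπw (i : σ) : π (w i) = algebraMap k (R ⧸ J) (a i) * π y := by
    simpa using (Ideal.Quotient.mk_eq_mk_iff_sub_mem _ _).mpr (hJ i)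
  have hspan : (Ideal.span (Set.range w)).map π ≤ Ideal.span {π y} := by
    rw [Ideal.map_span, Ideal.span_le]
    rintro _ ⟨_, ⟨i, rfl⟩, rfl⟩
    exact Ideal.mem_span_singleton'.mpr ⟨_, (hπw i).symm⟩
  have hmem : π (aeval w F) ∈ (maximalIdeal R).map π * Ideal.span {π y ^ r} := by
    have := Ideal.mem_map_of_mem π hFw
    rw [Ideal.map_mul, Ideal.map_pow] at this
    rw [← Ideal.span_singleton_pow]
    exact Ideal.mul_mono_right (Ideal.pow_right_mono hspan r) this
  obtain ⟨_, hm', hmul⟩ := Ideal.mem_mul_span_singleton.mp hmem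
  obtain ⟨m, hm, rfl⟩ := (Ideal.mem_map_iff_of_surjective π Ideal.Quotient.mk_surjective).mp hm'
  have hπF : π (aeval w F) = π (algebraMap k R (eval a F)) * π y ^ r := by
    calc π (aeval w F) = aeval (fun i => π (w i)) F := (aeval_algebraMap_apply (R ⧸ J) w F).symm
      _ = aeval (fun i => algebraMap k (R ⧸ J) (a i)) F * π y ^ r := by
          simp only [hπw, aeval_mul_right_of_isHomogeneous hF]
      _ = π (algebraMap k R (eval a F)) * π y ^ r :=
          congrArg (· * π y ^ r) (aeval_algebraMap_apply (R ⧸ J) a F)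
  have hunit : IsUnit (algebraMap k R (eval a F) - m) := by
    by_contra hnon
    have : algebraMap k R (eval a F) ∈ maximalIdeal R := by
      simpa using add_mem ((mem_maximalIdeal _).mpr hnon) hm
    exact (mem_maximalIdeal _).mp this ((IsUnit.mk0 _ ha).map _)
  rw [← J.unit_mul_mem_iff_mem hunit, ← Ideal.Quotient.eq_zero_iff_mem]
  change π _ = 0
  rw [map_mul, map_sub, map_pow, sub_mul, hmul, hπF, sub_self]

lemma eq_zero_of_aeval_mem_maximalIdeal_mul [Infinite k] [IsNoetherianRing R] {d : ℕ}
    {w : Fin d → R} (hw : maximalIdeal R ∈ (Ideal.span (Set.range w)).minimalPrimes)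
    (hd : d ≤ (maximalIdeal R).height) {F : MvPolynomial (Fin d) k} {r : ℕ}
    (hF : F.IsHomogeneous r)
    (hFw : aeval w F ∈ maximalIdeal R * Ideal.span (Set.range w) ^ r) : F = 0 := by
  by_contra hne
  obtain _ | d := d
  · rw [eq_C_of_isEmpty F] at hFw hne
    rw [aeval_C] at hFw
    have hunit : IsUnit (algebraMap k R (coeff 0 F)) := by
      refine (IsUnit.mk0 _ fun h => hne ?_).map _
      simp [h]
    exact (mem_maximalIdeal _).mp (Ideal.mul_le_left hFw) hunit
  obtain ⟨a, ha⟩ : ∃ a, eval a (F * X 0) ≠ 0 := by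
    by_contra! hzero
    exact mul_ne_zero hne (X_ne_zero 0) (MvPolynomial.funext (by simpa using hzero))
  rw [map_mul, eval_X, mul_ne_zero_iff] at ha
  -- Modulo the `d` elements `g i`, each `w j` equals `a j * y`; then `F(w) ≡ F(a) y ^ r` makes `y`
  -- nilpotent, so `d` elements suffice to cut out the closed point.
  let y := algebraMap k R (a 0)⁻¹ * w 0
  let g (i : Fin d) : R := w i.succ - algebraMap k R (a i.succ) * y
  have hg (i) : w i - algebraMap k R (a i) * y ∈ Ideal.span (Set.range g) := by
    refine Fin.cases ?_ (fun i => Ideal.subset_span ⟨i, rfl⟩) i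
    rw [← mul_assoc, ← map_mul, mul_inv_cancel₀ ha.2, map_one, one_mul, sub_self]
    exact Ideal.zero_mem _
  have hy : y ∈ (Ideal.span (Set.range g)).radical :=
    ⟨r, pow_mem_of_aeval_mem_maximalIdeal_mul hF hFw ha.1 hg⟩
  have hwM (i) : w i ∈ maximalIdeal R := hw.1.2 (Ideal.subset_span ⟨i, rfl⟩)
  have hgM (i) : g i ∈ maximalIdeal R :=
    sub_mem (hwM _) (Ideal.mul_mem_left _ _ (Ideal.mul_mem_left _ _ (hwM 0)))
  have hmin : maximalIdeal R ∈ (Ideal.span (Set.range g)).minimalPrimes := by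
    refine mem_minimalPrimes_of_le_radical hw (Ideal.span_le.mpr (Set.range_subset_iff.mpr hgM))
      (Ideal.span_le.mpr (Set.range_subset_iff.mpr fun i => ?_))
    simpa using add_mem (Ideal.le_radical (hg i)) (Ideal.mul_mem_left _ (algebraMap k R (a i)) hy)
  have hle : d + 1 ≤ (Set.range g).ncard := by
    exact_mod_cast hd.trans
      (Ideal.height_le_card_of_mem_minimalPrimes_span (Set.finite_range g) hmin)
  have hcard : (Set.range g).ncard ≤ d := by
    simpa [Nat.card_coe_set_eq] using Finite.card_range_le g
  omega

end AnalyticIndependence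

section VanishingOrderAtPrime

open MvPolynomial IsLocalRing

lemma pderiv_mem_pow_idealOfVars {k σ : Type*} [CommSemiring k] {f : MvPolynomial σ k} {n : ℕ}
    (hf : f ∈ idealOfVars σ k ^ (n + 1)) (i : σ) : pderiv i f ∈ idealOfVars σ k ^ n := by
  rw [mem_pow_idealOfVars_iff'] at hf ⊢
  intro e he
  rw [coeff_pderiv, hf _ (by simpa using he), zero_mul]

lemma eval_zero_iteratedPDeriv_of_mem_pow {k : Type*} [CommSemiring k] {d n : ℕ}
    {f : MvPolynomial (Fin d) k} (hf : f ∈ idealOfVars (Fin d) k ^ n) {v : List (Fin d)}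
    (hv : v.length < n) : eval 0 (iteratedPDeriv v f) = 0 := by
  induction v generalizing f n with
  | nil =>
    rw [eval_zero, constantCoeff_eq]
    exact (mem_pow_idealOfVars_iff' n f).mp hf 0 (by simpa using hv)
  | cons i v ih =>
    obtain ⟨n, rfl⟩ := Nat.exists_eq_add_one_of_ne_zero (Nat.ne_zero_of_lt hv)
    exact ih (pderiv_mem_pow_idealOfVars hf i) (by simpa using hv)

lemma coeff_restrictToLine_mem_pow_add {k R : Type*} [CommSemiring k] [CommRing R] [Nontrivial R]
    [IsAddTorsionFree R] [Algebra k R] {d : ℕ} {y z : Fin d → R} {I : Ideal R}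
    (hI : ∀ i, (y - z) i ∈ I) {f : MvPolynomial (Fin d) k} {m n : ℕ}
    (hfy : ∀ v : List (Fin d), v.length < m → aeval y (iteratedPDeriv v f) = 0)
    (hfz : ∀ v : List (Fin d), v.length < n → aeval z (iteratedPDeriv v f) = 0) (j : ℕ) :
    (restrictToLine z (y - z) f).coeff j ∈ I ^ (m + n) := by
  have hy : (Polynomial.X - Polynomial.C 1) ^ m ∣ restrictToLine z (y - z) f :=
    X_sub_C_pow_dvd_restrictToLine _ _ _ (by simpa using hfy)
  have hz : (Polynomial.X - Polynomial.C 0) ^ n ∣ restrictToLine z (y - z) f :=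
    X_sub_C_pow_dvd_restrictToLine _ _ _ (by simpa using hfz)
  have hcop : IsCoprime ((Polynomial.X - Polynomial.C (1 : R)) ^ m)
      ((Polynomial.X - Polynomial.C 0) ^ n) :=
    (Polynomial.isCoprime_X_sub_C_of_isUnit_sub (by simp)).pow
  have hm := (Polynomial.monic_X_sub_C (1 : R)).pow m
  have hn := (Polynomial.monic_X_sub_C (0 : R)).pow n
  have := coeff_mem_pow_of_monic_dvd (restrictToLine_mem_reesAlgebra hI f) (hm.mul hn)
    (hcop.mul_dvd hy hz) j
  rwa [hm.natDegree_mul hn, (Polynomial.monic_X_sub_C _).natDegree_pow,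
    (Polynomial.monic_X_sub_C _).natDegree_pow, Polynomial.natDegree_X_sub_C,
    Polynomial.natDegree_X_sub_C, mul_one, mul_one] at this

theorem mem_pow_idealOfVars_of_isLocalRing {k R : Type*} [Field k] [CharZero k] [CommRing R]
    [IsNoetherianRing R] [IsLocalRing R] [Algebra k R] {d : ℕ} {y z : Fin d → R}
    (hz : ∀ i, z i ∈ maximalIdeal R)
    (hmin : maximalIdeal R ∈ (Ideal.span (Set.range (y - z))).minimalPrimes)
    (hd : d ≤ (maximalIdeal R).height) {f : MvPolynomial (Fin d) k} {m n : ℕ}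
    (hfy : ∀ v : List (Fin d), v.length < m → aeval y (iteratedPDeriv v f) = 0)
    (hfz : ∀ v : List (Fin d), v.length < n → aeval z (iteratedPDeriv v f) = 0) :
    f ∈ idealOfVars (Fin d) k ^ (m + n) := by
  have : IsAddTorsionFree R := .of_isTorsionFree k R
  set I := Ideal.span (Set.range (y - z))
  have hI (i) : (y - z) i ∈ I := Ideal.subset_span ⟨i, rfl⟩
  rw [mem_pow_idealOfVars_iff']
  intro e he
  have hcoeff : (restrictToLine z (y - z) f).coeff e.degree ∈ maximalIdeal R * I ^ e.degree := by
    refine (Ideal.pow_le_pow_right he).trans ?_ (coeff_restrictToLine_mem_pow_add hI hfy hfz _)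
    rw [pow_succ']
    exact Ideal.mul_mono_left hmin.1.2
  have hcomp : homogeneousComponent e.degree f = 0 := by
    refine eq_zero_of_aeval_mem_maximalIdeal_mul hmin hd (homogeneousComponent_isHomogeneous _ f) ?_
    simpa using sub_mem hcoeff (coeff_restrictToLine_sub_mem hz hI f e.degree)
  simpa [coeff_homogeneousComponent] using congrArg (coeff e) hcomp

theorem mem_pow_idealOfVars_of_isPrime {k A : Type*} [Field k] [CharZero k] [CommRing A]
    [IsNoetherianRing A] [Algebra k A] {P : Ideal A} [P.IsPrime] {d : ℕ} {y z : Fin d → A}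
    (hz : ∀ i, z i ∈ P) (hmin : P ∈ (Ideal.span (Set.range (y - z))).minimalPrimes)
    (hd : d ≤ P.height) {f : MvPolynomial (Fin d) k} {m n : ℕ}
    (hfy : ∀ v : List (Fin d), v.length < m → aeval y (iteratedPDeriv v f) = 0)
    (hfz : ∀ v : List (Fin d), v.length < n → aeval z (iteratedPDeriv v f) = 0) :
    f ∈ idealOfVars (Fin d) k ^ (m + n) := by
  let R := Localization.AtPrime P
  have : IsNoetherianRing R := IsLocalization.isNoetherianRing P.primeCompl R ‹_›
  have hP : (maximalIdeal R).under A = P := Localization.AtPrime.under_maximalIdeal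
  have hspan : Ideal.span (Set.range (algebraMap A R ∘ y - algebraMap A R ∘ z)) =
      (Ideal.span (Set.range (y - z))).map (algebraMap A R) := by
    rw [Ideal.map_span, ← Set.range_comp]
    congr 2
    ext i
    simp
  refine mem_pow_idealOfVars_of_isLocalRing (R := R) (y := algebraMap A R ∘ y)
    (z := algebraMap A R ∘ z) (fun i => ?_) ?_ ?_ (fun v hv => ?_) (fun v hv => ?_)
  · change z i ∈ (maximalIdeal R).under A
    rw [hP]
    exact hz i
  · rw [hspan, IsLocalization.minimalPrimes_map P.primeCompl]
    change (maximalIdeal R).under A ∈ (Ideal.span (Set.range (y - z))).minimalPrimes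
    rwa [hP]
  · rwa [← IsLocalization.height_under P.primeCompl, hP]
  · rw [aeval_algebraMap_apply, hfy v hv, map_zero]
  · rw [aeval_algebraMap_apply, hfz v hv, map_zero]

end VanishingOrderAtPrime

section Diagonal

open MvPolynomial

lemma mem_minimalPrimes_span_sub {k A σ : Type*} [CommRing k] [CommRing A] [Algebra k A]
    {φ ψ : MvPolynomial σ k →ₐ[k] A} (hgen : φ.range ⊔ ψ.range = ⊤)
    {p q : Ideal (MvPolynomial σ k)} (hp : p ≤ RingHom.ker φ) (hq : q ≤ RingHom.ker ψ)
    {P : Ideal A} [P.IsPrime] (hP : ∀ i, φ (X i) - ψ (X i) ∈ P)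
    (hmin : P.comap φ ∈ (p ⊔ q).minimalPrimes) :
    P ∈ (Ideal.span (Set.range (φ ∘ X - ψ ∘ X))).minimalPrimes := by
  refine ⟨⟨‹_›, Ideal.span_le.mpr (Set.range_subset_iff.mpr hP)⟩, fun Q ⟨hQ, hdiag⟩ hQP => ?_⟩
  -- The two copies of `MvPolynomial σ k` agree modulo `Q`, so `Q` is determined by `Q.comap φ`.
  let π := Ideal.Quotient.mkₐ k Q
  have hφψ : π.comp φ = π.comp ψ := MvPolynomial.algHom_ext fun i =>
    (Ideal.Quotient.mk_eq_mk_iff_sub_mem _ _).mpr (hdiag (Ideal.subset_span ⟨i, rfl⟩))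
  have hsurj : Function.Surjective (π.comp φ) := by
    rw [← AlgHom.range_eq_top, ← sup_idem (π.comp φ).range]
    nth_rw 2 [hφψ]
    rw [AlgHom.range_comp, AlgHom.range_comp, ← Algebra.map_sup, hgen, Algebra.map_top,
      AlgHom.range_eq_top]
    exact Ideal.Quotient.mk_surjective
  have hker : Q.comap φ = RingHom.ker (π.comp φ) := by
    ext g
    change φ g ∈ Q ↔ Ideal.Quotient.mk Q (φ g) = 0
    exact Ideal.Quotient.eq_zero_iff_mem.symm
  have hpq : p ⊔ q ≤ Q.comap φ := by
    rw [hker]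
    refine sup_le (fun g hg => ?_) (hφψ ▸ fun g hg => ?_)
    · simp [RingHom.mem_ker.mp (hp hg)]
    · simp [RingHom.mem_ker.mp (hq hg)]
  have hle : P.comap φ ≤ Q.comap φ := hmin.2 ⟨hQ.comap φ, hpq⟩ (Ideal.comap_mono hQP)
  intro x hx
  obtain ⟨g, hg⟩ := hsurj (π x)
  have hgx : φ g - x ∈ Q := (Ideal.Quotient.mk_eq_mk_iff_sub_mem _ _).mp hg
  have hgP : g ∈ P.comap φ := by
    simpa using add_mem (hQP hgx) hx
  have hgQ : φ g ∈ Q := hle hgP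
  simpa using sub_mem hgQ hgx

end Diagonal

section Height

open scoped TensorProduct

lemma height_eq_of_isMaximal_mvPolynomial {k : Type*} [Field k] {n : ℕ}
    (P : Ideal (MvPolynomial (Fin n) k)) [hP : P.IsMaximal] : P.height = n := by
  induction n with
  | zero =>
    have hle := Ideal.height_le_ringKrullDim_of_ne_top hP.ne_top
    rw [MvPolynomial.ringKrullDim_of_isNoetherianRing, ringKrullDim_eq_zero_of_field] at hle
    simpa using hle
  | succ n ih =>
    let e := (MvPolynomial.finSuccEquiv k n).toRingEquiv
    have : (P.map e).IsMaximal := Ideal.map_isMaximal_of_equiv e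
    let N := (P.map e).under (MvPolynomial (Fin n) k)
    have : N.IsMaximal := Polynomial.isMaximal_comap_C_of_isJacobsonRing (P.map e)
    have : (P.map e).LiesOver N := ⟨rfl⟩
    calc P.height = (P.map e).height := (e.height_map P).symm
      _ = N.height + 1 := Polynomial.height_eq_height_add_one N (P.map e)
      _ = (n + 1 : ℕ) := by rw [ih N, Nat.cast_add_one]

lemma ringKrullDim_le_of_isIntegral (A B : Type*) [CommRing A] [CommRing B] [Algebra A B]
    [Algebra.IsIntegral A B] : ringKrullDim B ≤ ringKrullDim A :=
  Order.krullDim_le_of_strictMono (PrimeSpectrum.comap (algebraMap A B))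
    fun _ _ hlt => Ideal.IsIntegral.comap_lt_comap hlt

lemma height_eq_ringKrullDim_of_isMaximal (k : Type*) {D : Type*} [Field k] [CommRing D]
    [IsDomain D] [Algebra k D] [Algebra.FiniteType k D] (M : Ideal D) [M.IsMaximal] :
    M.height = ringKrullDim D := by
  refine le_antisymm (Ideal.height_le_ringKrullDim_of_ne_top Ideal.IsPrime.ne_top') ?_
  obtain ⟨s, g, hinj, hint⟩ := exists_integral_inj_algHom_of_fg k D
  have : IsNoetherianRing D := Algebra.FiniteType.isNoetherianRing k D
  let _ : Algebra (MvPolynomial (Fin s) k) D := g.toRingHom.toAlgebra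
  have : Algebra.IsIntegral (MvPolynomial (Fin s) k) D := ⟨hint⟩
  have : FaithfulSMul (MvPolynomial (Fin s) k) D :=
    (faithfulSMul_iff_algebraMap_injective _ _).mpr hinj
  let N := M.under (MvPolynomial (Fin s) k)
  have : N.IsMaximal := Ideal.isMaximal_comap_of_isIntegral_of_isMaximal M
  have : M.LiesOver N := ⟨rfl⟩
  calc ringKrullDim D ≤ ringKrullDim (MvPolynomial (Fin s) k) := ringKrullDim_le_of_isIntegral _ _
    _ = N.height := by
      rw [height_eq_of_isMaximal_mvPolynomial, MvPolynomial.ringKrullDim_of_isNoetherianRing,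
        ringKrullDim_eq_zero_of_field, zero_add, Nat.card_fin]
      rfl
    _ ≤ M.height := by
      rw [Ideal.height_eq_height_add_of_liesOver_of_hasGoingDown N M]
      exact WithBot.coe_le_coe.mpr le_self_add

lemma height_map_quotientMk_eq_ringKrullDim (k : Type*) {A : Type*} [Field k] [CommRing A]
    [Algebra k A] [Algebra.FiniteType k A] {p M : Ideal A} [p.IsPrime] [M.IsMaximal] (h : p ≤ M) :
    (M.map (Ideal.Quotient.mk p)).height = ringKrullDim (A ⧸ p) := by
  have : (M.map (Ideal.Quotient.mk p)).IsMaximal :=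
    .map_of_surjective_of_ker_le Ideal.Quotient.mk_surjective (Ideal.mk_ker.trans_le h)
  exact height_eq_ringKrullDim_of_isMaximal k _

lemma height_le_height_comap_of_surjective {A B : Type*} [CommRing A] [CommRing B] {φ : A →+* B}
    (hφ : Function.Surjective φ) (Q : Ideal B) [hQ : Q.IsPrime] :
    Q.height ≤ (Q.comap φ).height := by
  have h := Order.height_le_height_apply_of_strictMono (PrimeSpectrum.comap φ)
    (RingHom.strictMono_comap_of_surjective hφ) ⟨Q, hQ⟩
  rwa [← PrimeSpectrum.height_eq_orderHeight, ← PrimeSpectrum.height_eq_orderHeight] at h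

lemma height_le_height_map_comap_quotientMk {A B : Type*} [CommRing A] [CommRing B] {φ : A →+* B}
    (hφ : Function.Surjective φ) {I : Ideal A} (hI : I ≤ RingHom.ker φ) (Q : Ideal B) [Q.IsPrime] :
    Q.height ≤ ((Q.comap φ).map (Ideal.Quotient.mk I)).height := by
  let φ' := Ideal.Quotient.lift I φ hI
  have hφ' : φ'.comp (Ideal.Quotient.mk I) = φ := Ideal.Quotient.lift_comp_mk I φ hI
  have : (Q.comap φ).map (Ideal.Quotient.mk I) = Q.comap φ' := by
    rw [← Ideal.map_comap_of_surjective _ Ideal.Quotient.mk_surjective (Q.comap φ'),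
      Ideal.comap_comap, hφ']
  rw [this]
  exact height_le_height_comap_of_surjective
    (Ideal.Quotient.lift_surjective_of_surjective I hI hφ) Q

lemma height_ker_add_height_ker_le_height_ker_productMap {k D E : Type*} [Field k] [CommRing D]
    [CommRing E] [Algebra k D] [Algebra k E] [IsNoetherianRing D]
    [IsNoetherianRing (D ⊗[k] E)]
    (α : D →ₐ[k] k) (β : E →ₐ[k] k) :
    (RingHom.ker α).height + (RingHom.ker β).height ≤
      (RingHom.ker (Algebra.TensorProduct.productMap α β)).height := by
  set γ := Algebra.TensorProduct.productMap α β
  have : (RingHom.ker γ).IsPrime := RingHom.ker_isPrime _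
  have : (RingHom.ker α).IsPrime := RingHom.ker_isPrime _
  have : (RingHom.ker β).IsPrime := RingHom.ker_isPrime _
  have : (RingHom.ker γ).LiesOver (RingHom.ker α) := ⟨by
    ext x
    simp [γ, Ideal.mem_comap, Algebra.TensorProduct.algebraMap_apply]⟩
  -- `ψ` is the projection onto the fibre over the point `α`.
  let ψ : D ⊗[k] E →ₐ[k] E :=
    Algebra.TensorProduct.productMap ((Algebra.ofId k E).comp α) (AlgHom.id k E)
  have hψ : Function.Surjective ψ := fun e => ⟨1 ⊗ₜ e, by simp [ψ]⟩
  have hψker : (RingHom.ker α).map (algebraMap D (D ⊗[k] E)) ≤ RingHom.ker ψ.toRingHom := by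
    rw [Ideal.map_le_iff_le_comap]
    intro x hx
    simp [ψ, Ideal.mem_comap, Algebra.TensorProduct.algebraMap_apply, RingHom.mem_ker.mp hx]
  have hcomap : (RingHom.ker β).comap ψ.toRingHom = RingHom.ker γ := by
    have : β.comp ψ = γ := by
      ext <;> simp [ψ, γ, Algebra.ofId_apply]
    rw [← this]
    rfl
  rw [Ideal.height_eq_height_add_of_liesOver_of_hasGoingDown (RingHom.ker α) (RingHom.ker γ),
    ← hcomap]
  gcongr
  exact height_le_height_map_comap_quotientMk hψ hψker _

end Height

section ProductVariety

open MvPolynomial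
open scoped TensorProduct

lemma ker_aeval_zero {k σ : Type*} [CommSemiring k] :
    RingHom.ker (aeval (0 : σ → k)) = idealOfVars σ k := by
  ext f
  rw [RingHom.mem_ker, ← pow_one (idealOfVars σ k), mem_pow_idealOfVars_iff']
  simp [Finsupp.degree_eq_zero_iff, aeval_zero, constantCoeff_eq]

lemma idealOfVars_isMaximal {k σ : Type*} [Field k] : (idealOfVars σ k).IsMaximal := by
  rw [← ker_aeval_zero]
  exact RingHom.ker_isMaximal_of_surjective _ fun c => ⟨C c, by simp⟩

lemma range_includeLeft_comp_sup_range_includeRight_comp {k S T D E : Type*} [CommRing k]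
    [CommRing S] [CommRing T] [CommRing D] [CommRing E] [Algebra k S] [Algebra k T] [Algebra k D]
    [Algebra k E] {φ : S →ₐ[k] D} {ψ : T →ₐ[k] E} (hφ : Function.Surjective φ)
    (hψ : Function.Surjective ψ) :
    ((Algebra.TensorProduct.includeLeft : D →ₐ[k] D ⊗[k] E).comp φ).range ⊔
      (Algebra.TensorProduct.includeRight.comp ψ).range = ⊤ := by
  rw [← Algebra.TensorProduct.map_range, AlgHom.range_eq_top]
  exact TensorProduct.map_surjective hφ hψ

lemma ker_quotient_liftₐ {k A B : Type*} [CommRing k] [CommRing A] [CommRing B] [Algebra k A]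
    [Algebra k B] {I : Ideal A} {φ : A →ₐ[k] B} (hI : I ≤ RingHom.ker φ) :
    RingHom.ker (Ideal.Quotient.liftₐ I φ hI) = (RingHom.ker φ).map (Ideal.Quotient.mk I) :=
  Ideal.ker_quotient_lift (φ : A →+* B) hI

variable {k : Type*} [Field k] [CharZero k] {d : ℕ}

theorem mem_pow_idealOfVars_of_surjective {D E : Type*} [CommRing D] [CommRing E] [Algebra k D]
    [Algebra k E] {φ : MvPolynomial (Fin d) k →ₐ[k] D} {ψ : MvPolynomial (Fin d) k →ₐ[k] E}
    (hφ : Function.Surjective φ) (hψ : Function.Surjective ψ) {α : D →ₐ[k] k} {β : E →ₐ[k] k}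
    (hα : α.comp φ = aeval 0) (hβ : β.comp ψ = aeval 0)
    (hmin : idealOfVars (Fin d) k ∈ (RingHom.ker φ ⊔ RingHom.ker ψ).minimalPrimes)
    (hdim : d ≤ (RingHom.ker α).height + (RingHom.ker β).height)
    {f : MvPolynomial (Fin d) k} {m n : ℕ}
    (hfφ : ∀ v : List (Fin d), v.length < m → φ (iteratedPDeriv v f) = 0)
    (hfψ : ∀ v : List (Fin d), v.length < n → ψ (iteratedPDeriv v f) = 0) :
    f ∈ idealOfVars (Fin d) k ^ (m + n) := by
  have : Algebra.FiniteType k D := .of_surjective φ hφ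
  have : Algebra.FiniteType k E := .of_surjective ψ hψ
  have : IsNoetherianRing D := Algebra.FiniteType.isNoetherianRing k D
  have : Algebra.FiniteType k (D ⊗[k] E) := .trans (S := D) ‹_› inferInstance
  have : IsNoetherianRing (D ⊗[k] E) := Algebra.FiniteType.isNoetherianRing k (D ⊗[k] E)
  let γ := Algebra.TensorProduct.productMap α β
  let Φ : MvPolynomial (Fin d) k →ₐ[k] D ⊗[k] E := Algebra.TensorProduct.includeLeft.comp φ
  let Ψ : MvPolynomial (Fin d) k →ₐ[k] D ⊗[k] E := Algebra.TensorProduct.includeRight.comp ψ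
  have hγΦ (g) : γ (Φ g) = aeval 0 g := by simp [γ, Φ, ← hα]
  have hγΨ (g) : γ (Ψ g) = aeval 0 g := by simp [γ, Ψ, ← hβ]
  have hprime : (RingHom.ker γ).IsPrime := RingHom.ker_isPrime _
  have hcomap : (RingHom.ker γ).comap Φ = idealOfVars (Fin d) k := by
    ext g
    rw [Ideal.mem_comap, RingHom.mem_ker, hγΦ, ← RingHom.mem_ker, ker_aeval_zero]
  refine mem_pow_idealOfVars_of_isPrime (P := RingHom.ker γ) (y := Φ ∘ X) (z := Ψ ∘ X)
    (fun i => ?_) ?_ ?_ (fun v hv => ?_) (fun v hv => ?_)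
  · simp [RingHom.mem_ker, hγΨ]
  · refine mem_minimalPrimes_span_sub (range_includeLeft_comp_sup_range_includeRight_comp hφ hψ)
      (p := RingHom.ker φ) (q := RingHom.ker ψ) (fun g hg => ?_) (fun g hg => ?_) (fun i => ?_) ?_
    · simp [RingHom.mem_ker.mp hg]
    · simp [RingHom.mem_ker.mp hg]
    · rw [RingHom.mem_ker, map_sub, hγΦ, hγΨ, sub_self]
    · rwa [hcomap]
  · exact hdim.trans (height_ker_add_height_ker_le_height_ker_productMap α β)
  · rw [← aeval_unique Φ, AlgHom.comp_apply, hfφ v hv, map_zero]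
  · rw [← aeval_unique Ψ, AlgHom.comp_apply, hfψ v hv, map_zero]

theorem mem_pow_idealOfVars_of_mem_minimalPrimes_sup {p q : Ideal (MvPolynomial (Fin d) k)}
    (hmin : idealOfVars (Fin d) k ∈ (p ⊔ q).minimalPrimes)
    (hdim : d ≤ ((idealOfVars (Fin d) k).map (Ideal.Quotient.mk p)).height +
      ((idealOfVars (Fin d) k).map (Ideal.Quotient.mk q)).height)
    {f : MvPolynomial (Fin d) k} {m n : ℕ}
    (hfp : ∀ v : List (Fin d), v.length < m → iteratedPDeriv v f ∈ p)
    (hfq : ∀ v : List (Fin d), v.length < n → iteratedPDeriv v f ∈ q) :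
    f ∈ idealOfVars (Fin d) k ^ (m + n) := by
  have hpq : p ⊔ q ≤ RingHom.ker (aeval (0 : Fin d → k)) := by
    rw [ker_aeval_zero]
    exact hmin.1.2
  have hp : p ≤ RingHom.ker (aeval (0 : Fin d → k)) := le_sup_left.trans hpq
  have hq : q ≤ RingHom.ker (aeval (0 : Fin d → k)) := le_sup_right.trans hpq
  refine mem_pow_idealOfVars_of_surjective (Ideal.Quotient.mkₐ_surjective k p)
    (Ideal.Quotient.mkₐ_surjective k q) (α := Ideal.Quotient.liftₐ p (aeval 0) hp)
    (β := Ideal.Quotient.liftₐ q (aeval 0) hq) (Ideal.Quotient.liftₐ_comp p _ hp)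
    (Ideal.Quotient.liftₐ_comp q _ hq) ?_ ?_
    (fun v hv => Ideal.Quotient.eq_zero_iff_mem.mpr (hfp v hv))
    (fun v hv => Ideal.Quotient.eq_zero_iff_mem.mpr (hfq v hv))
  · have hker (I : Ideal (MvPolynomial (Fin d) k)) : RingHom.ker (Ideal.Quotient.mkₐ k I) = I :=
      Ideal.mk_ker
    rwa [hker, hker]
  · rwa [ker_quotient_liftₐ, ker_quotient_liftₐ, ker_aeval_zero]

end ProductVariety

section Nullstellensatz

open MvPolynomial

variable {k : Type*} [Field k]

lemma affineZeros_eq_zeroLocus {d : ℕ} (p : Ideal (MvPolynomial (Fin d) k)) :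
    affineZeros p = zeroLocus k p := by
  ext a
  simp [affineZeros, mem_zeroLocus_iff, aeval_eq_eval]

lemma vanishingIdeal_singleton_zero {σ : Type*} :
    vanishingIdeal k {(0 : σ → k)} = idealOfVars σ k := by
  ext f
  rw [mem_vanishingIdeal_singleton_iff, ← ker_aeval_zero, RingHom.mem_ker]

lemma vanishingIdeal_singleton_mem_minimalPrimes_of_finite {σ : Type*} [IsAlgClosed k] [Finite σ]
    {I : Ideal (MvPolynomial σ k)} (hI : (zeroLocus k I).Finite) {a : σ → k}
    (ha : a ∈ zeroLocus k I) : vanishingIdeal k {a} ∈ I.minimalPrimes := by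
  have hmax (b : σ → k) : (vanishingIdeal k {b}).IsMaximal :=
    isMaximal_iff_eq_vanishingIdeal_singleton.mpr ⟨b, rfl⟩
  refine ⟨⟨(hmax a).isPrime, ?_⟩, fun Q ⟨hQ, hIQ⟩ hQa => ?_⟩
  · exact le_zeroLocus_iff_le_vanishingIdeal.mp (Set.singleton_subset_iff.mpr ha)
  · have hfin : (zeroLocus k Q).Finite := hI.subset (zeroLocus_anti_mono hIQ)
    have hinf : hfin.toFinset.inf (fun b => vanishingIdeal k {b}) ≤ Q := by
      intro f hf
      rw [Submodule.mem_finsetInf] at hf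
      rw [← IsPrime.vanishingIdeal_zeroLocus (K := k) Q]
      intro b hb
      exact hf b (hfin.mem_toFinset.mpr hb) b rfl
    obtain ⟨b, -, hb⟩ := hQ.inf_le'.mp hinf
    rwa [← (hmax b).eq_of_le (hmax a).ne_top (hb.trans hQa)]

lemma mem_of_forall_eval_eq_zero [IsAlgClosed k] {d : ℕ} {p : Ideal (MvPolynomial (Fin d) k)}
    [p.IsPrime] {g : MvPolynomial (Fin d) k} (hg : ∀ a ∈ affineZeros p, eval a g = 0) : g ∈ p := by
  rw [affineZeros_eq_zeroLocus] at hg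
  rw [← IsPrime.vanishingIdeal_zeroLocus (K := k) p]
  exact hg

lemma idealOfVars_mem_minimalPrimes_sup_of_finite [IsAlgClosed k] {d : ℕ}
    {p q : Ideal (MvPolynomial (Fin d) k)} (hfin : (affineZeros p ∩ affineZeros q).Finite)
    (h0p : 0 ∈ affineZeros p) (h0q : 0 ∈ affineZeros q) :
    idealOfVars (Fin d) k ∈ (p ⊔ q).minimalPrimes := by
  have hsup : zeroLocus k (p ⊔ q) = affineZeros p ∩ affineZeros q := by
    rw [affineZeros_eq_zeroLocus, affineZeros_eq_zeroLocus]
    exact zeroLocus_vanishingIdeal_galoisConnection.l_sup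
  rw [← hsup] at hfin
  rw [← vanishingIdeal_singleton_zero]
  exact vanishingIdeal_singleton_mem_minimalPrimes_of_finite hfin (hsup ▸ ⟨h0p, h0q⟩)

end Nullstellensatz

theorem statement4_general {k : Type*} [Field k] [CharZero k] {d : ℕ}
    (p q : Ideal (MvPolynomial (Fin d) k))
    (hmin : MvPolynomial.idealOfVars (Fin d) k ∈ (p ⊔ q).minimalPrimes)
    (hdim : d ≤ ((MvPolynomial.idealOfVars (Fin d) k).map (Ideal.Quotient.mk p)).height +
      ((MvPolynomial.idealOfVars (Fin d) k).map (Ideal.Quotient.mk q)).height)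
    (f : MvPolynomial (Fin d) k) (m n : ℕ)
    (hfp : ∀ v : List (Fin d), v.length < m → iteratedPDeriv v f ∈ p)
    (hfq : ∀ v : List (Fin d), v.length < n → iteratedPDeriv v f ∈ q) :
    ∀ v : List (Fin d), v.length < m + n →
      MvPolynomial.eval (0 : Fin d → k) (iteratedPDeriv v f) = 0 := fun _ hv =>
  eval_zero_iteratedPDeriv_of_mem_pow
    (mem_pow_idealOfVars_of_mem_minimalPrimes_sup hmin hdim hfp hfq) hv

/-- Let `k` be an algebraically closed field of characteristic `0`, and let
`Y = V(p)` and `Z = V(q)` be closed subvarieties of affine `d`-space over `k` that intersect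
in finitely many points, including the origin, with `dim Y + dim Z = d`.  If a nonzero
polynomial `f` vanishes to order `m` along `Y` and to order `n` along `Z`, then `f`
vanishes to order at least `m + n` at the origin, i.e. all partial derivatives of `f` of
order `< m + n` vanish at the origin. -/
theorem statement4 (k : Type*) [Field k] [IsAlgClosed k] [CharZero k] (d : ℕ)
    (p q : Ideal (MvPolynomial (Fin d) k)) (hp : p.IsPrime) (hq : q.IsPrime)
    (hfin : (affineZeros p ∩ affineZeros q).Finite)
    (h0p : (0 : Fin d → k) ∈ affineZeros p) (h0q : (0 : Fin d → k) ∈ affineZeros q)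
    (hdim : ringKrullDim (MvPolynomial (Fin d) k ⧸ p) +
      ringKrullDim (MvPolynomial (Fin d) k ⧸ q) = (d : WithBot ℕ∞))
    (f : MvPolynomial (Fin d) k) (hf : f ≠ 0) (m n : ℕ)
    (hfY : VanishesToOrderAlong f (affineZeros p) m)
    (hfZ : VanishesToOrderAlong f (affineZeros q) n) :
    ∀ v : List (Fin d), v.length < m + n →
      MvPolynomial.eval (0 : Fin d → k) (iteratedPDeriv v f) = 0 := by
  have hmin := idealOfVars_mem_minimalPrimes_sup_of_finite hfin h0p h0q
  have hle := hmin.1.2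
  have : (MvPolynomial.idealOfVars (Fin d) k).IsMaximal := idealOfVars_isMaximal
  rw [← height_map_quotientMk_eq_ringKrullDim k (le_sup_left.trans hle),
    ← height_map_quotientMk_eq_ringKrullDim k (le_sup_right.trans hle)] at hdim
  exact statement4_general p q hmin (by exact_mod_cast hdim.ge) f m n
    (fun v hv => mem_of_forall_eval_eq_zero (hfY.1 v hv))
    (fun v hv => mem_of_forall_eval_eq_zero (hfZ.1 v hv))
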